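/- arXiv:2211.04506 — 2 statements merged into one kernel-verified Lean document; each statement's English description precedes it below -/
import Mathlib

section
/- Let n ≥ 4 be even. Then the max cut space of K_n has dimension at least C(n−1,2). -/
/-!
Write `n = 2k`, let `W` be the max cut space and let `E i j` be the unit vector of the pair
`{i, j}`. The idea is that `W` together with the `n - 1` vectors `E 0 j` (the star at `0`) spans
the whole space `ℝ^{C(n,2)}`, so that `dim W ≥ C(n,2) - (n-1) = C(n-1,2)`.

Let `f` be a linear functional vanishing on `W` and on the star. For distinct `a, b, c, d` pick a set
`R` of `k - 2` further vertices. The alternating sum of the cut vectors of `R ∪ {a,c}`, `R ∪ {b,d}`,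
`R ∪ {a,d}`, `R ∪ {b,c}` is `-2 (E a c + E b d - E a d - E b c)` (`cutVec_alternating`), so `f`
vanishes on this 4-cycle vector. Taking `a = 0` gives `f (E b d) = f (E b c)` for distinct nonzero
`b, c, d`; hence `f` takes one common value `l` on all pairs avoiding `0`. Evaluating `f` on a single
maximum cut gives `l` times the number of cut edges avoiding `0`, a positive number, so `l = 0`
and `f = 0`.
-/

/-- Unordered pairs of distinct elements of `Fin n`, represented as ordered
pairs `(i, j)` with `i < j`; there are `n.choose 2` of them. -/
abbrev PairIdx (n : ℕ) := {p : Fin n × Fin n // p.1 < p.2}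

/-- The cut indicator vector `v_S ∈ ℝ^{C(n,2)}`: the coordinate at the pair
`{i, j}` is `1` if exactly one of `i, j` lies in `S`, and `0` otherwise. -/
noncomputable def cutVec (n : ℕ) (S : Finset (Fin n)) : PairIdx n → ℝ :=
  fun p => if (p.1.1 ∈ S ↔ p.1.2 ∈ S) then 0 else 1

/-- `S` is a maximum cut of the complete graph `K_n` (all edge weights `1`):
it maximizes `|S| * (n - |S|)`. -/
def IsMaxCut (n : ℕ) (S : Finset (Fin n)) : Prop :=
  ∀ T : Finset (Fin n), T.card * (n - T.card) ≤ S.card * (n - S.card)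

/-- The `0`/`1` indicator function of a set of vertices. -/
noncomputable def vertexInd {n : ℕ} (S : Finset (Fin n)) (i : Fin n) : ℝ := if i ∈ S then 1 else 0

/-- The unit vector of the unordered pair `{i, j}`, for `i ≠ j`, written as a polynomial in
indicator functions so that identities between such vectors can be checked by `ring`. -/
noncomputable def pairVec {n : ℕ} (i j : Fin n) : PairIdx n → ℝ := fun p =>
  vertexInd {i} p.1.1 * vertexInd {j} p.1.2 + vertexInd {j} p.1.1 * vertexInd {i} p.1.2

lemma pairVec_comm {n : ℕ} (i j : Fin n) : pairVec i j = pairVec j i := by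
  funext p
  simp only [pairVec]
  ring

lemma cutVec_apply_eq {n : ℕ} (S : Finset (Fin n)) (p : PairIdx n) :
    cutVec n S p = vertexInd S p.1.1 + vertexInd S p.1.2
      - 2 * vertexInd S p.1.1 * vertexInd S p.1.2 := by
  unfold cutVec vertexInd
  by_cases h1 : p.1.1 ∈ S <;> by_cases h2 : p.1.2 ∈ S <;> simp [h1, h2]
  norm_num

lemma vertexInd_insert {n : ℕ} {S : Finset (Fin n)} {a : Fin n} (ha : a ∉ S) (i : Fin n) :
    vertexInd (insert a S) i = vertexInd {a} i + vertexInd S i := by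
  unfold vertexInd
  by_cases h : i = a
  · subst h; simp [ha]
  · simp [h]

lemma cutVec_alternating {n : ℕ} {R : Finset (Fin n)} {a b c d : Fin n}
    (ha : a ∉ R) (hb : b ∉ R) (hc : c ∉ R) (hd : d ∉ R)
    (hac : a ≠ c) (had : a ≠ d) (hbc : b ≠ c) (hbd : b ≠ d) :
    cutVec n (insert a (insert c R)) + cutVec n (insert b (insert d R))
      - cutVec n (insert a (insert d R)) - cutVec n (insert b (insert c R))
      = (-2 : ℝ) • (pairVec a c + pairVec b d - pairVec a d - pairVec b c) := by
  funext p
  have h1 : a ∉ insert c R := by simp [ha, hac]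
  have h2 : b ∉ insert d R := by simp [hb, hbd]
  have h3 : a ∉ insert d R := by simp [ha, had]
  have h4 : b ∉ insert c R := by simp [hb, hbc]
  simp only [Pi.add_apply, Pi.sub_apply, Pi.smul_apply, smul_eq_mul, cutVec_apply_eq,
    vertexInd_insert h1, vertexInd_insert h2, vertexInd_insert h3, vertexInd_insert h4,
    vertexInd_insert hc, vertexInd_insert hd, pairVec]
  ring

lemma pairVec_eq_single {n : ℕ} (p : PairIdx n) : pairVec p.1.1 p.1.2 = Pi.single p 1 := by
  classical
  funext q
  obtain ⟨⟨i, j⟩, hij⟩ := p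
  obtain ⟨⟨x, y⟩, hxy⟩ := q
  simp only at hij hxy
  simp only [pairVec, vertexInd, Finset.mem_singleton, Pi.single_apply, Subtype.mk.injEq,
    Prod.mk.injEq]
  -- The transposed term vanishes, since `x = j` and `y = i` would reverse the order.
  have h : ¬ (x = j ∧ y = i) := by
    rintro ⟨rfl, rfl⟩
    exact absurd hij (not_lt.mpr hxy.le)
  by_cases h1 : x = i <;> by_cases h2 : y = j <;> by_cases h3 : x = j <;> by_cases h4 : y = i <;>
    simp_all

lemma isMaxCut_of_card {k : ℕ} {S : Finset (Fin (k + k))} (hS : S.card = k) :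
    IsMaxCut (k + k) S := by
  intro T
  have hT : T.card ≤ k + k := by simpa using Finset.card_le_univ T
  obtain ⟨m, hm⟩ := Nat.exists_eq_add_of_le hT
  have h1 : k + k - T.card = m := by omega
  have h2 : k + k - k = k := by omega
  rw [hS, h1, h2]
  zify at hm ⊢
  nlinarith [sq_nonneg ((T.card : ℤ) - m)]

/-- A functional killing the star at `z` and all 4-cycle vectors is constant on the pairs
avoiding `z`. -/
lemma eq_of_fourCycle {n : ℕ} {z : Fin n} {f : (PairIdx n → ℝ) →ₗ[ℝ] ℝ}
    (hstar : ∀ j, j ≠ z → f (pairVec z j) = 0)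
    (hcyc : ∀ a b c d : Fin n, a ≠ b → a ≠ c → a ≠ d → b ≠ c → b ≠ d → c ≠ d →
      f (pairVec a c) + f (pairVec b d) - f (pairVec a d) - f (pairVec b c) = 0)
    {b d b' d' : Fin n} (hb : b ≠ z) (hd : d ≠ z) (hb' : b' ≠ z) (hd' : d' ≠ z)
    (hbd : b ≠ d) (hbd' : b' ≠ d') : f (pairVec b d) = f (pairVec b' d') := by
  have key : ∀ x y w : Fin n, x ≠ z → y ≠ z → w ≠ z → x ≠ y → x ≠ w →
      f (pairVec x y) = f (pairVec x w) := by
    intro x y w hx hy hw hxy hxw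
    by_cases hyw : y = w
    · rw [hyw]
    have h := hcyc z x w y hx.symm hw.symm hy.symm hxw hxy (Ne.symm hyw)
    rw [hstar w hw, hstar y hy] at h
    linarith
  by_cases h : d' = b
  · subst h
    rw [key d' d b' hb hd hb' hbd hbd'.symm, pairVec_comm]
  · rw [key b d d' hb hd hd' hbd (Ne.symm h), pairVec_comm b d',
      key d' b b' hd' hb hb' h hbd'.symm, pairVec_comm]

/-- The max cut space together with the star at vertex `0` spans everything, stated dually. -/
lemma functional_eq_zero {k : ℕ} (hk : 2 ≤ k) {z : Fin (k + k)}
    (hz : (z : ℕ) = 0) (f : (PairIdx (k + k) → ℝ) →ₗ[ℝ] ℝ)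
    (hcut : ∀ S, IsMaxCut (k + k) S → f (cutVec (k + k) S) = 0)
    (hstar : ∀ j, j ≠ z → f (pairVec z j) = 0) : f = 0 := by
  classical
  have hcyc : ∀ a b c d : Fin (k + k), a ≠ b → a ≠ c → a ≠ d → b ≠ c → b ≠ d → c ≠ d →
      f (pairVec a c) + f (pairVec b d) - f (pairVec a d) - f (pairVec b c) = 0 := by
    intro a b c d hab hac had hbc hbd hcd
    obtain ⟨R, hRsub, hR⟩ := Finset.exists_subset_card_eq
      (s := ({a, b, c, d} : Finset (Fin (k + k)))ᶜ) (n := k - 2) (by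
        have := Finset.card_le_four (a := a) (b := b) (c := c) (d := d)
        rw [Finset.card_compl, Fintype.card_fin]
        omega)
    have hnot : ∀ x ∈ ({a, b, c, d} : Finset (Fin (k + k))), x ∉ R := fun x hx hxR =>
      (Finset.mem_compl.mp (hRsub hxR)) hx
    have ha := hnot a (by simp)
    have hb := hnot b (by simp)
    have hc := hnot c (by simp)
    have hd := hnot d (by simp)
    have hmax : ∀ x y : Fin (k + k), x ∉ R → y ∉ R → x ≠ y →
        f (cutVec (k + k) (insert x (insert y R))) = 0 := by
      intro x y hx hy hxy
      apply hcut
      apply isMaxCut_of_card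
      rw [Finset.card_insert_of_notMem (by simp [hx, hxy]), Finset.card_insert_of_notMem hy]
      omega
    have h := congrArg f (cutVec_alternating ha hb hc hd hac had hbc hbd)
    simp only [map_sub, map_add, map_smul, smul_eq_mul, hmax a c ha hc hac, hmax b d hb hd hbd,
      hmax a d ha hd had, hmax b c hb hc hbc] at h
    linarith
  -- Two further vertices; a maximum cut separating them contains the edge `{u, w}` avoiding `z`.
  let u : Fin (k + k) := ⟨1, by omega⟩
  let w : Fin (k + k) := ⟨2, by omega⟩
  have huz : u ≠ z := by intro h; have := congrArg Fin.val h; simp [u, hz] at this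
  have hwz : w ≠ z := by intro h; have := congrArg Fin.val h; simp [w, hz] at this
  have huw : u < w := by simp [u, w]
  set l := f (pairVec u w) with hl
  have hval : ∀ p : PairIdx (k + k),
      f (Pi.single p 1) = (if p.1.1 = z then 0 else 1) * l := by
    intro p
    have h2 : p.1.2 ≠ z := by
      intro h
      have := Fin.lt_def.mp p.2
      rw [h] at this
      omega
    rw [← pairVec_eq_single]
    split_ifs with h
    · rw [h, hstar _ h2, zero_mul]
    · rw [one_mul]
      exact eq_of_fourCycle hstar hcyc h h2 huz hwz p.2.ne huw.ne
  have hexp : ∀ v : PairIdx (k + k) → ℝ,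
      f v = (∑ p, v p * (if p.1.1 = z then 0 else 1)) * l := by
    intro v
    rw [LinearMap.pi_apply_eq_sum_univ f v, Finset.sum_mul]
    refine Finset.sum_congr rfl fun p _ => ?_
    have : (fun j => if p = j then (1 : ℝ) else 0) = Pi.single p 1 := by
      funext j; simp [Pi.single_apply, eq_comm]
    rw [this, hval, smul_eq_mul, mul_assoc]
  have hl0 : l = 0 := by
    obtain ⟨S, huS, hSw, hS⟩ := Finset.exists_subsuperset_card_eq (n := k)
      (s := ({u} : Finset (Fin (k + k)))) (t := ({w} : Finset (Fin (k + k)))ᶜ)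
      (by simp [huw.ne']) (by simp; omega)
      (by rw [Finset.card_compl, Fintype.card_fin, Finset.card_singleton]; omega)
    have hu : u ∈ S := huS (by simp)
    have hw : w ∉ S := fun h => by simpa using hSw h
    have h := hcut S (isMaxCut_of_card hS)
    rw [hexp] at h
    refine (mul_eq_zero.mp h).resolve_left (ne_of_gt ?_)
    refine Finset.sum_pos' (fun p _ => ?_) ⟨⟨(u, w), huw⟩, Finset.mem_univ _, ?_⟩
    · unfold cutVec
      split_ifs <;> norm_num
    · simp [cutVec, hu, hw, huz]
  ext v
  simp [hval, hl0]

/-- For even `n ≥ 4`, the max cut space of `K_n` (the span of the indicator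
vectors of the maximum cuts) has dimension at least `C(n-1,2)`. -/
theorem maxCutSpace_complete_even_lower (n : ℕ) (hn : 4 ≤ n) (heven : Even n) :
    (n - 1).choose 2 ≤
      Module.finrank ℝ
        ↥(Submodule.span ℝ
          {v : PairIdx n → ℝ | ∃ S : Finset (Fin n), IsMaxCut n S ∧ v = cutVec n S}) := by
  classical
  obtain ⟨k, rfl⟩ := heven
  set W := Submodule.span ℝ
    {v : PairIdx (k + k) → ℝ | ∃ S : Finset (Fin (k + k)), IsMaxCut (k + k) S ∧
      v = cutVec (k + k) S} with hW
  let z : Fin (k + k) := ⟨0, by omega⟩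
  let star : {j : Fin (k + k) // j ≠ z} → (PairIdx (k + k) → ℝ) := fun j => pairVec z j
  have htop : W ⊔ Submodule.span ℝ (Set.range star) = ⊤ := by
    by_contra hne
    obtain ⟨f, hf, hle⟩ := Submodule.exists_le_ker_of_lt_top _ (lt_top_iff_ne_top.mpr hne)
    refine hf (functional_eq_zero (by omega) (z := z) rfl f (fun S hS => ?_) fun j hj => ?_)
    · exact LinearMap.mem_ker.mp
        (hle (Submodule.mem_sup_left (Submodule.subset_span ⟨S, hS, rfl⟩)))
    · exact LinearMap.mem_ker.mp
        (hle (Submodule.mem_sup_right (Submodule.subset_span ⟨⟨j, hj⟩, rfl⟩)))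
  have hstar : Module.finrank ℝ (Submodule.span ℝ (Set.range star)) ≤ k + k - 1 := by
    refine (finrank_range_le_card star).trans (le_of_eq ?_)
    simp [Fintype.card_subtype_compl]
  have hsum := Submodule.finrank_add_le_finrank_add_finrank W (Submodule.span ℝ (Set.range star))
  rw [htop, finrank_top, Module.finrank_fintype_fun_eq_card] at hsum
  have hcard : Fintype.card (PairIdx (k + k)) = (k + k).choose 2 := by
    rw [Fintype.card_subtype, Fintype.card_product_filter_lt, Fintype.card_fin]
  have hpascal : (k + k).choose 2 = (k + k - 1) + (k + k - 1).choose 2 := by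
    obtain ⟨m, hm⟩ : ∃ m, k + k = m + 1 := ⟨k + k - 1, by omega⟩
    rw [hm, Nat.choose_succ_succ' m 1]
    simp
  omega
end

section
/- Let n ≥ 4 be even. Then the max cut space of K_n equals the subspace {x ∈ ℝ^{C(n,2)} : the sums Σ_{k≠i} x_{ik} take the same value for every vertex i ∈ {1,…,n}}; in particular the max cut space of K_n has dimension exactly C(n−1,2). -/
/-- The coordinate `x_{ik}` of `x ∈ ℝ^{C(n,2)}` at the unordered pair `{i, k}`
(`0` if `i = k`). -/
noncomputable def pairEntry (n : ℕ) (x : PairIdx n → ℝ) (i k : Fin n) : ℝ :=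
  if h : i < k then x ⟨(i, k), h⟩ else if h' : k < i then x ⟨(k, i), h'⟩ else 0

/-- The total weight `Σ_{k ≠ i} x_{ik}` that `x ∈ ℝ^{C(n,2)}` puts at the
vertex `i`. -/
noncomputable def vertexSum (n : ℕ) (x : PairIdx n → ℝ) (i : Fin n) : ℝ :=
  ∑ k ∈ Finset.univ.erase i, pairEntry n x i k

/-! ### Edge vectors and maximum cuts -/

/-- The indicator vector of the edge `{i, k}`, for `i ≠ k`. -/
noncomputable def edgeVec (n : ℕ) (i k : Fin n) : PairIdx n → ℝ :=
  fun p => (if p.1.1 = i then 1 else 0) * (if p.1.2 = k then 1 else 0)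
    + (if p.1.1 = k then 1 else 0) * (if p.1.2 = i then 1 else 0)

theorem edgeVec_comm (n : ℕ) (i k : Fin n) : edgeVec n i k = edgeVec n k i := by
  ext p; simp only [edgeVec]; ring

theorem edgeVec_pair (n : ℕ) (p : PairIdx n) : edgeVec n p.1.1 p.1.2 = Pi.single p 1 := by
  ext q
  obtain ⟨⟨a, b⟩, hab⟩ := p
  obtain ⟨⟨c, d⟩, hcd⟩ := q
  simp only [edgeVec, Pi.single_apply, Subtype.mk.injEq, Prod.mk.injEq] at *
  by_cases h1 : c = a <;> by_cases h2 : d = b <;> by_cases h3 : c = b <;> by_cases h4 : d = a <;>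
    simp [*] <;> grind

theorem isMaxCut_iff (m : ℕ) (S : Finset (Fin (m + m))) :
    IsMaxCut (m + m) S ↔ S.card = m := by
  have key : ∀ c ≤ m + m, c * (m + m - c) ≤ m * m ∧ (m * m ≤ c * (m + m - c) → c = m) := by
    intro c hc
    obtain ⟨d, hd⟩ := Nat.exists_eq_add_of_le hc
    have : m + m - c = d := by omega
    rw [this]
    zify at hd ⊢
    have h4 : (4 : ℤ) * (m * m) = 4 * (c * d) + (c - d) ^ 2 := by
      linear_combination (m + m + c + d : ℤ) * hd
    refine ⟨by nlinarith [sq_nonneg ((c : ℤ) - d)], fun h => ?_⟩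
    have : ((c : ℤ) - d) = 0 := by
      apply pow_eq_zero_iff (two_ne_zero) |>.1
      nlinarith [sq_nonneg ((c : ℤ) - d)]
    linarith
  have hle : ∀ T : Finset (Fin (m + m)), T.card ≤ m + m := fun T => by
    simpa using T.card_le_univ
  constructor
  · intro h
    obtain ⟨T, -, hT⟩ := Finset.exists_subset_card_eq
      (s := (Finset.univ : Finset (Fin (m + m)))) (n := m) (by simp)
    have := h T
    rw [hT, Nat.add_sub_cancel] at this
    exact (key _ (hle S)).2 this
  · intro h T
    rw [h, Nat.add_sub_cancel]
    exact (key _ (hle T)).1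

theorem vertexSum_cutVec (m : ℕ) (S : Finset (Fin (m + m))) (hS : S.card = m)
    (i : Fin (m + m)) : vertexSum (m + m) (cutVec (m + m) S) i = m := by
  have h1 : vertexSum (m + m) (cutVec (m + m) S) i
      = ∑ k, if (i ∈ S ↔ k ∈ S) then (0 : ℝ) else 1 := by
    unfold vertexSum
    rw [← Finset.sum_erase (a := i) Finset.univ (by simp)]
    refine Finset.sum_congr rfl fun k hk => ?_
    have hne : k ≠ i := Finset.ne_of_mem_erase hk
    unfold pairEntry cutVec
    rcases lt_or_gt_of_ne hne with h | h
    · simp only [h, not_lt_of_gt h, dite_true, dite_false]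
      simp only [iff_comm]
    · simp only [h, dite_true]
  rw [h1]
  have hc : (Sᶜ).card = m := by rw [Finset.card_compl, hS]; simp
  by_cases hi : i ∈ S
  · have : ∀ k, (if (i ∈ S ↔ k ∈ S) then (0 : ℝ) else 1) = if k ∈ Sᶜ then 1 else 0 := by
      intro k; by_cases hk : k ∈ S <;> simp [hi, hk]
    simp only [this]
    rw [Finset.sum_ite_mem]
    simp only [Finset.univ_inter, Finset.sum_const, hc]; simp
  · have : ∀ k, (if (i ∈ S ↔ k ∈ S) then (0 : ℝ) else 1) = if k ∈ S then 1 else 0 := by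
      intro k; by_cases hk : k ∈ S <;> simp [hi, hk]
    simp only [this]
    rw [Finset.sum_ite_mem]
    simp only [Finset.univ_inter, Finset.sum_const, hS]; simp

/-! ### Functionals vanishing on the cut vectors -/

/-- Modulo linear terms, `v_S` is `-2 s_a s_b` for the indicator function `s` of `S`; the second
difference kills the linear terms and leaves a signed 4-cycle. -/
theorem cutVec_second_difference (n : ℕ) (R : Finset (Fin n)) (i j k l : Fin n)
    (hi : i ∉ R) (hj : j ∉ R) (hk : k ∉ R) (hl : l ∉ R)
    (hik : i ≠ k) (hil : i ≠ l) (hjk : j ≠ k) (hjl : j ≠ l) :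
    cutVec n (insert i (insert k R)) - cutVec n (insert j (insert k R))
      - cutVec n (insert i (insert l R)) + cutVec n (insert j (insert l R))
    = (-2 : ℝ) • (edgeVec n i k - edgeVec n j k - edgeVec n i l + edgeVec n j l) := by
  have hcut : ∀ (S : Finset (Fin n)) (p : PairIdx n), cutVec n S p
      = (if p.1.1 ∈ S then 1 else 0) + (if p.1.2 ∈ S then 1 else 0)
        - 2 * (if p.1.1 ∈ S then 1 else 0) * (if p.1.2 ∈ S then 1 else 0) := by
    intro S p
    unfold cutVec
    by_cases h1 : p.1.1 ∈ S <;> by_cases h2 : p.1.2 ∈ S <;> simp [h1, h2] <;> norm_num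
  have hind : ∀ (u v a : Fin n), u ∉ R → v ∉ R → u ≠ v →
      (if a ∈ insert u (insert v R) then (1 : ℝ) else 0)
        = (if a ∈ R then 1 else 0) + (if a = u then 1 else 0) + (if a = v then 1 else 0) := by
    intro u v a hu hv huv
    by_cases h1 : a = u
    · subst h1; simp [hu, huv]
    · by_cases h2 : a = v
      · subst h2; simp [hv, h1]
      · simp [h1, h2]
  ext p
  simp only [Pi.add_apply, Pi.sub_apply, Pi.smul_apply, smul_eq_mul, hcut,
    hind i k _ hi hk hik, hind j k _ hj hk hjk, hind i l _ hi hl hil, hind j l _ hj hl hjl,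
    edgeVec]
  ring

/-- The four-point condition makes a symmetric weight a sum of vertex potentials. With base vertices
`0, 1, 2`, the potential at `0` must be `t = (ω 0 1 + ω 0 2 - ω 1 2) / 2`, and then the one at
`i ≠ 0` must be `ω 0 i - t`. -/
theorem exists_potential (n : ℕ) (hn : 4 ≤ n) (ω : Fin n → Fin n → ℝ)
    (hsymm : ∀ i j, ω i j = ω j i)
    (hω : ∀ i j k l, i ≠ j → i ≠ k → i ≠ l → j ≠ k → j ≠ l → k ≠ l →
      ω i k + ω j l = ω j k + ω i l) :
    ∃ a : Fin n → ℝ, ∀ i j, i ≠ j → ω i j = a i + a j := by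
  obtain ⟨o, ho⟩ : ∃ o : Fin n, o.val = 0 := ⟨⟨0, by omega⟩, rfl⟩
  obtain ⟨p, hp⟩ : ∃ o : Fin n, o.val = 1 := ⟨⟨1, by omega⟩, rfl⟩
  obtain ⟨q, hq⟩ : ∃ o : Fin n, o.val = 2 := ⟨⟨2, by omega⟩, rfl⟩
  have hop : o ≠ p := by rintro rfl; omega
  have hoq : o ≠ q := by rintro rfl; omega
  have hpq : p ≠ q := by rintro rfl; omega
  refine ⟨fun i => if i = o then (ω o p + ω o q - ω p q) / 2
    else ω o i - (ω o p + ω o q - ω p q) / 2, fun i j hij => ?_⟩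
  by_cases hi : i = o
  · subst hi; simp [hij.symm]
  by_cases hj : j = o
  · subst hj; simp [hij]; exact hsymm _ _
  simp only [hi, hj, if_false]
  have main : ∀ u v, u ≠ o → v ≠ o → u ≠ v → u ≠ q → v ≠ p →
      ω u v = ω o u + ω o v - (ω o p + ω o q - ω p q) := by
    intro u v hu hv huv huq hvp
    by_cases hup : u = p
    · subst hup
      by_cases hvq : v = q
      · subst hvq; ring
      · have := hω u o v q hop.symm huv huq hv.symm hoq hvq
        linarith
    · have h1 := hω p o u q hop.symm (Ne.symm hup) hpq hu.symm hoq huq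
      have h2 := hω o u p v hu.symm hop hv.symm hup huv hvp.symm
      linarith [hsymm u p]
  -- Up to exchanging `i` and `j`, the side conditions of `main` hold.
  by_cases h : i ≠ q ∧ j ≠ p
  · linarith [main i j hi hj hij h.1 h.2]
  · have h' : j ≠ q ∧ i ≠ p := by
      grind
    linarith [main j i hj hi hij.symm h'.1 h'.2, hsymm i j]

theorem sum_potential_mul (n : ℕ) (a : Fin n → ℝ) (x : PairIdx n → ℝ) :
    ∑ p : PairIdx n, x p * (a p.1.1 + a p.1.2) = ∑ i, a i * vertexSum n x i := by
  have h0 : ∀ i, vertexSum n x i = ∑ k, pairEntry n x i k := by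
    intro i
    exact Finset.sum_erase _ (by simp [pairEntry])
  -- The entry `x_{ik}` splits into its contributions from `i < k` and `k < i`.
  let y : Fin n × Fin n → ℝ := fun q => if h : q.1 < q.2 then x ⟨q, h⟩ else 0
  have hy : ∀ i k, pairEntry n x i k = y (i, k) + y (k, i) := by
    intro i k
    simp only [pairEntry, y]
    rcases lt_trichotomy i k with h | h | h
    · simp [h, not_lt_of_gt h]
    · simp [h]
    · simp [h, not_lt_of_gt h]
  have hL : ∑ p : PairIdx n, x p * (a p.1.1 + a p.1.2)
      = ∑ q : Fin n × Fin n, y q * (a q.1 + a q.2) := by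
    rw [← Finset.sum_filter_add_sum_filter_not Finset.univ (fun q : Fin n × Fin n => q.1 < q.2),
      Finset.sum_eq_zero (s := Finset.univ.filter fun q : Fin n × Fin n => ¬ q.1 < q.2), add_zero,
      Finset.sum_subtype (p := fun q : Fin n × Fin n => q.1 < q.2) _ (by simp)]
    · refine Finset.sum_congr rfl fun p _ => ?_
      have hp : y p.1 = x p := dif_pos p.2
      rw [hp]
    · intro q hq
      have hq' : y q = 0 := dif_neg (Finset.mem_filter.1 hq).2
      rw [hq', zero_mul]
  rw [hL, Fintype.sum_prod_type]
  simp only [h0, hy, Finset.mul_sum, mul_add, Finset.sum_add_distrib]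
  congr 1
  · simp only [mul_comm]
  · rw [Finset.sum_comm]; simp only [mul_comm]

/-! ### Vectors with constant vertex sums -/

/-- The vertex sums as a linear map. -/
noncomputable def vertexSumLin (n : ℕ) : (PairIdx n → ℝ) →ₗ[ℝ] (Fin n → ℝ) where
  toFun x := vertexSum n x
  map_add' x y := by
    ext i
    simp only [vertexSum, Pi.add_apply, ← Finset.sum_add_distrib]
    refine Finset.sum_congr rfl fun k _ => ?_
    unfold pairEntry; split_ifs <;> simp
  map_smul' c x := by
    ext i
    simp only [vertexSum, Pi.smul_apply, RingHom.id_apply, smul_eq_mul, Finset.mul_sum]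
    refine Finset.sum_congr rfl fun k _ => ?_
    unfold pairEntry; split_ifs <;> simp

/-- For `x_{ij} = b i + b j` the vertex sum at `i` is `(n - 2) * b i + ∑ b`, so a preimage of `y` is
given by `b i = (y i - s) / (n - 2)` with `s = ∑ b = ∑ y / (2 n - 2)`. -/
theorem vertexSumLin_surjective (n : ℕ) (hn : 4 ≤ n) :
    Function.Surjective (vertexSumLin n) := by
  intro y
  have hn' : (4 : ℝ) ≤ n := by exact_mod_cast hn
  have h2 : (n : ℝ) - 2 ≠ 0 := by linarith
  have h1 : 2 * (n : ℝ) - 2 ≠ 0 := by linarith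
  set s : ℝ := (∑ i, y i) / (2 * n - 2) with hs
  set b : Fin n → ℝ := fun i => (y i - s) / (n - 2) with hb
  have hsum : ∑ i, b i = s := by
    simp only [hb, ← Finset.sum_div, Finset.sum_sub_distrib, Finset.sum_const, Finset.card_univ,
      Fintype.card_fin, nsmul_eq_mul]
    have : ∑ i, y i = s * (2 * n - 2) := by rw [hs, div_mul_cancel₀ _ h1]
    rw [this]; field_simp; ring
  refine ⟨fun p => b p.1.1 + b p.1.2, ?_⟩
  ext i
  change vertexSum n _ i = y i
  have : vertexSum n (fun p => b p.1.1 + b p.1.2) i = ∑ k ∈ Finset.univ.erase i, (b i + b k) := by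
    refine Finset.sum_congr rfl fun k hk => ?_
    have hne : k ≠ i := Finset.ne_of_mem_erase hk
    unfold pairEntry
    rcases lt_or_gt_of_ne hne with h | h
    · simp [h, not_lt_of_gt h, add_comm]
    · simp [h]
  rw [this, Finset.sum_erase_eq_sub (Finset.mem_univ i), Finset.sum_add_distrib, hsum]
  simp only [Finset.sum_const, Finset.card_univ, Fintype.card_fin, nsmul_eq_mul, hb]
  field_simp; ring

theorem card_pairIdx (n : ℕ) : Fintype.card (PairIdx n) = n.choose 2 := by
  have h := Finset.card_product_filter_lt (s := (Finset.univ : Finset (Fin n)))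
  rw [Finset.univ_product_univ, Finset.card_univ, Fintype.card_fin] at h
  rw [← h, Fintype.card_subtype]

/-- The vectors with constant vertex sums, as the kernel of the vertex sum map modulo constants. -/
noncomputable def regularSpace (n : ℕ) : Submodule ℝ (PairIdx n → ℝ) :=
  LinearMap.ker ((Submodule.span ℝ {(1 : Fin n → ℝ)}).mkQ ∘ₗ vertexSumLin n)

theorem mem_regularSpace (n : ℕ) (hn : 4 ≤ n) (x : PairIdx n → ℝ) :
    x ∈ regularSpace n ↔ ∀ i j, vertexSum n x i = vertexSum n x j := by
  rw [regularSpace, LinearMap.mem_ker, LinearMap.comp_apply, Submodule.mkQ_apply,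
    Submodule.Quotient.mk_eq_zero, Submodule.mem_span_singleton]
  constructor
  · rintro ⟨c, hc⟩ i j
    have h : ∀ i, vertexSum n x i = c := fun i => by
      have := congrFun hc i
      simpa [vertexSumLin] using this.symm
    rw [h, h]
  · intro h
    refine ⟨vertexSum n x ⟨0, by omega⟩, ?_⟩
    ext i
    simpa [vertexSumLin] using h _ _

theorem finrank_regularSpace (n : ℕ) (hn : 4 ≤ n) :
    Module.finrank ℝ (regularSpace n) = (n - 1).choose 2 := by
  have hsurj : Function.Surjective
      ((Submodule.span ℝ {(1 : Fin n → ℝ)}).mkQ ∘ₗ vertexSumLin n) :=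
    (Submodule.mkQ_surjective _).comp (vertexSumLin_surjective n hn)
  have h1 := LinearMap.finrank_range_add_finrank_ker
    ((Submodule.span ℝ {(1 : Fin n → ℝ)}).mkQ ∘ₗ vertexSumLin n)
  rw [LinearMap.range_eq_top.2 hsurj, finrank_top, Module.finrank_fintype_fun_eq_card,
    card_pairIdx] at h1
  have h2 := Submodule.finrank_quotient_add_finrank (Submodule.span ℝ {(1 : Fin n → ℝ)})
  have hone : (1 : Fin n → ℝ) ≠ 0 := fun h => by
    simpa using congrFun h ⟨0, by omega⟩
  rw [finrank_span_singleton hone, Module.finrank_fintype_fun_eq_card, Fintype.card_fin] at h2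
  obtain ⟨k, rfl⟩ : ∃ k, n = k + 1 := ⟨n - 1, by omega⟩
  have h3 : (k + 1).choose 2 = k + k.choose 2 := by
    rw [Nat.choose_succ_succ' k 1, Nat.choose_one_right]
  change _ + Module.finrank ℝ (regularSpace (k + 1)) = _ at h1
  simp only [Nat.add_sub_cancel]
  omega

/-! ### The max cut space -/

theorem span_eq_regularSpace (n : ℕ) (hn : 4 ≤ n) (heven : Even n) :
    Submodule.span ℝ
      {v : PairIdx n → ℝ | ∃ S : Finset (Fin n), IsMaxCut n S ∧ v = cutVec n S}
      = regularSpace n := by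
  obtain ⟨m, rfl⟩ := heven
  apply le_antisymm
  · rw [Submodule.span_le]
    rintro _ ⟨S, hS, rfl⟩
    rw [isMaxCut_iff] at hS
    rw [SetLike.mem_coe, mem_regularSpace _ hn]
    intro i j
    rw [vertexSum_cutVec m S hS, vertexSum_cutVec m S hS]
  · intro x hx
    rw [mem_regularSpace _ hn] at hx
    by_contra hxs
    obtain ⟨φ, hφx, hφ⟩ := Submodule.exists_le_ker_of_notMem hxs
    have hcut : ∀ S : Finset (Fin (m + m)), S.card = m → φ (cutVec (m + m) S) = 0 :=
      fun S hS => hφ (Submodule.subset_span ⟨S, (isMaxCut_iff m S).2 hS, rfl⟩)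
    obtain ⟨a, ha⟩ := exists_potential (m + m) hn (fun i k => φ (edgeVec (m + m) i k))
      (fun i j => by rw [edgeVec_comm]) (by
        intro i j k l hij hik hil hjk hjl hkl
        obtain ⟨R, hR, hRc⟩ := Finset.exists_subset_card_eq
          (s := ({i, j, k, l} : Finset (Fin (m + m)))ᶜ) (n := m - 2) (by
            rw [Finset.card_compl, Fintype.card_fin]
            have := Finset.card_le_four (a := i) (b := j) (c := k) (d := l)
            omega)
        have hnot : ∀ u ∈ ({i, j, k, l} : Finset (Fin (m + m))), u ∉ R := fun u hu huR =>
          Finset.mem_compl.1 (hR huR) hu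
        have hi := hnot i (by simp)
        have hj := hnot j (by simp)
        have hk := hnot k (by simp)
        have hl := hnot l (by simp)
        have hcard : ∀ u v, u ∉ R → v ∉ R → u ≠ v → (insert u (insert v R)).card = m := by
          intro u v hu hv huv
          rw [Finset.card_insert_of_notMem (by simp [hu, huv]), Finset.card_insert_of_notMem hv,
            hRc]
          omega
        have h := congrArg φ
          (cutVec_second_difference (m + m) R i j k l hi hj hk hl hik hil hjk hjl)
        simp only [map_add, map_sub, map_smul, smul_eq_mul, hcut _ (hcard i k hi hk hik),
          hcut _ (hcard j k hj hk hjk), hcut _ (hcard i l hi hl hil),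
          hcut _ (hcard j l hj hl hjl)] at h
        linarith)
    have hφsum : ∀ z, φ z = ∑ i, a i * vertexSum (m + m) z i := by
      intro z
      rw [← sum_potential_mul, LinearMap.pi_apply_eq_sum_univ φ z]
      refine Finset.sum_congr rfl fun p _ => ?_
      rw [← ha _ _ p.2.ne, edgeVec_pair, smul_eq_mul]
      congr 2
      ext q
      simp [Pi.single_apply, eq_comm]
    obtain ⟨T, -, hT⟩ := Finset.exists_subset_card_eq
      (s := (Finset.univ : Finset (Fin (m + m)))) (n := m) (by simp)
    have hm : (m : ℝ) ≠ 0 := by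
      have : m ≠ 0 := by omega
      exact_mod_cast this
    have ha0 : ∑ i, a i = 0 := by
      have h := hcut T hT
      simp only [hφsum, vertexSum_cutVec m T hT, ← Finset.sum_mul] at h
      exact (mul_eq_zero.1 h).resolve_right hm
    apply hφx
    rw [hφsum, Finset.sum_congr rfl fun i _ => by rw [hx i ⟨0, by omega⟩], ← Finset.sum_mul, ha0,
      zero_mul]

/-- For even `n ≥ 4`, the max cut space of `K_n` is exactly the set of vectors
`x ∈ ℝ^{C(n,2)}` whose total weight at each vertex is the same for all
vertices; in particular its dimension is exactly `C(n-1,2)`. -/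
theorem maxCutSpace_complete_even (n : ℕ) (hn : 4 ≤ n) (heven : Even n) :
    (Submodule.span ℝ
        {v : PairIdx n → ℝ | ∃ S : Finset (Fin n), IsMaxCut n S ∧ v = cutVec n S}
        : Set (PairIdx n → ℝ))
      = {x : PairIdx n → ℝ | ∀ i j : Fin n, vertexSum n x i = vertexSum n x j} ∧
    Module.finrank ℝ
        ↥(Submodule.span ℝ
          {v : PairIdx n → ℝ | ∃ S : Finset (Fin n), IsMaxCut n S ∧ v = cutVec n S})
      = (n - 1).choose 2 := by
  rw [span_eq_regularSpace n hn heven]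
  refine ⟨?_, finrank_regularSpace n hn⟩
  ext x
  exact mem_regularSpace n hn x
end
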